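/- Let e be a natural number and let A, B, C be abelian groups with group homomorphisms a : ℤ^e → A, b : ℤ^e → B, p : A → C, q : B → C, and f : A → B, satisfying: p is surjective; the kernel of q is contained in the image of b; q ∘ f = p; and f(a(v)) = 2·b(v) for every v ∈ ℤ^e. Then the cokernel B/f(A) is isomorphic to a quotient of (ℤ/2ℤ)^e; in particular every element of B/f(A) is killed by 2 and B/f(A) has at most 2^e elements. -/

import Mathlib

/-!
Since `q ∘ f` is surjective, every element of `B` is congruent modulo `f(A)` to an element of
`ker q`, hence to one of `im b`: the composite `ℤ^e → B → B ⧸ f(A)` is onto. It kills `2ℤ^e`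
because `2 • b v = f (a v)`, so it factors through `ℤ^e / 2ℤ^e = (ℤ/2ℤ)^e`.
-/

open Function

section Codisjoint

variable {A B C D : Type*} [AddGroup A] [AddGroup B] [AddGroup C] [AddGroup D]

theorem surjective_comp_iff_codisjoint_range_ker {f : A →+ B} {q : B →+ C} (hq : Surjective q) :
    Surjective (q.comp f) ↔ Codisjoint f.range q.ker := by
  rw [← AddMonoidHom.range_eq_top, AddMonoidHom.range_comp, ← AddMonoidHom.range_eq_top.2 hq,
    AddSubgroup.map_eq_range_iff]

theorem codisjoint_range_of_ker_le {f : A →+ B} {q : B →+ C} {b : D →+ B}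
    (hqf : Surjective (q.comp f)) (hker : q.ker ≤ b.range) : Codisjoint b.range f.range := by
  have hq : Surjective q := Surjective.of_comp (g := f) hqf
  exact (((surjective_comp_iff_codisjoint_range_ker hq).1 hqf).mono_right hker).symm

end Codisjoint

section Reduction

variable {ι : Type*} {n : ℕ}

theorem surjective_intCast_compLeft :
    Surjective ((Int.castAddHom (ZMod n)).compLeft ι) :=
  ZMod.intCast_surjective.comp_left

theorem mem_ker_intCast_compLeft_iff {v : ι → ℤ} :
    v ∈ ((Int.castAddHom (ZMod n)).compLeft ι).ker ↔ ∃ w : ι → ℤ, v = n • w := by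
  simp only [AddMonoidHom.mem_ker, funext_iff, AddMonoidHom.compLeft_apply, comp_apply,
    Int.coe_castAddHom, Pi.zero_apply, ZMod.intCast_zmod_eq_zero_iff_dvd, nsmul_eq_mul]
  exact Classical.skolem

theorem exists_comp_intCast_compLeft_eq {G : Type*} [AddGroup G] (g : (ι → ℤ) →+ G)
    (hg : ∀ v, n • g v = 0) :
    ∃ φ : (ι → ZMod n) →+ G, φ.comp ((Int.castAddHom (ZMod n)).compLeft ι) = g := by
  have ker_le : ((Int.castAddHom (ZMod n)).compLeft ι).ker ≤ g.ker := by
    intro v hv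
    obtain ⟨w, rfl⟩ := mem_ker_intCast_compLeft_iff.1 hv
    rw [AddMonoidHom.mem_ker, map_nsmul, hg]
  exact ⟨AddMonoidHom.liftOfSurjective _ surjective_intCast_compLeft ⟨g, ker_le⟩,
    AddMonoidHom.liftOfRightInverse_comp _ _ _ ⟨g, ker_le⟩⟩

theorem exists_surjective_of_nsmul_eq_zero {G : Type*} [AddGroup G] {g : (ι → ℤ) →+ G}
    (g_surj : Surjective g) (hg : ∀ v, n • g v = 0) :
    ∃ φ : (ι → ZMod n) →+ G, Surjective φ := by
  obtain ⟨φ, rfl⟩ := exists_comp_intCast_compLeft_eq g hg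
  exact ⟨φ, Surjective.of_comp g_surj⟩

theorem finite_and_card_le_pow_of_surjective [Finite ι] [NeZero n] {X : Type*}
    {φ : (ι → ZMod n) → X} (hφ : Surjective φ) :
    Finite X ∧ Nat.card X ≤ n ^ Nat.card ι := by
  refine ⟨Finite.of_surjective φ hφ, ?_⟩
  simpa only [Nat.card_fun, Nat.card_zmod] using Nat.card_le_card_of_surjective φ hφ

end Reduction

theorem cokernel_quotient_of_two_torsion_general {ι A B : Type*} [Finite ι] {n : ℕ} [NeZero n]
    [AddGroup A] [AddCommGroup B] {b : (ι → ℤ) →+ B} {f : A →+ B}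
    (hbf : Codisjoint b.range f.range) (hn : ∀ v, n • b v ∈ f.range) :
    (∃ φ : (ι → ZMod n) →+ B ⧸ f.range, Surjective φ) ∧
    (∀ y : B ⧸ f.range, n • y = 0) ∧
    Finite (B ⧸ f.range) ∧ Nat.card (B ⧸ f.range) ≤ n ^ Nat.card ι := by
  let π := QuotientAddGroup.mk' f.range
  have π_comp_b_surj : Surjective (π.comp b) := by
    rwa [surjective_comp_iff_codisjoint_range_ker (QuotientAddGroup.mk'_surjective _),
      QuotientAddGroup.ker_mk']
  have nsmul_π_comp_b (v : ι → ℤ) : n • π.comp b v = 0 :=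
    (QuotientAddGroup.eq_zero_iff (n • b v)).2 (hn v)
  obtain ⟨φ, hφ⟩ := exists_surjective_of_nsmul_eq_zero π_comp_b_surj nsmul_π_comp_b
  exact ⟨⟨φ, hφ⟩, π_comp_b_surj.forall.2 nsmul_π_comp_b, finite_and_card_le_pow_of_surjective hφ⟩

/-- Given abelian groups `A`, `B`, `C` with homomorphisms `a : ℤ^e → A`,
`b : ℤ^e → B`, `p : A → C`, `q : B → C`, `f : A → B` such that `p` is surjective, `ker q ⊆ im b`,
`q ∘ f = p` and `f (a v) = 2 • b v` for all `v`, the cokernel `B ⧸ f(A)` is a quotient of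
`(ℤ/2ℤ)^e`; in particular it is killed by `2` and has at most `2^e` elements. -/
theorem cokernel_quotient_of_two_torsion (e : ℕ) (A B C : Type*)
    [AddCommGroup A] [AddCommGroup B] [AddCommGroup C]
    (a : (Fin e → ℤ) →+ A) (b : (Fin e → ℤ) →+ B)
    (p : A →+ C) (q : B →+ C) (f : A →+ B)
    (hp : Function.Surjective p)
    (hker : ∀ x : B, q x = 0 → x ∈ Set.range b)
    (hqf : ∀ x : A, q (f x) = p x)
    (hfa : ∀ v : Fin e → ℤ, f (a v) = 2 • b v) :
    (∃ φ : (Fin e → ZMod 2) →+ B ⧸ f.range, Function.Surjective φ) ∧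
    (∀ y : B ⧸ f.range, 2 • y = 0) ∧
    Finite (B ⧸ f.range) ∧ Nat.card (B ⧸ f.range) ≤ 2 ^ e := by
  have q_comp_f : q.comp f = p := AddMonoidHom.ext hqf
  simpa only [Nat.card_fin] using cokernel_quotient_of_two_torsion_general
    (codisjoint_range_of_ker_le (q_comp_f ▸ hp) hker) fun v ↦ ⟨a v, hfa v⟩
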